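/- Nonnegativity of conditional mutual information (strong subadditivity): for any state ρ on H_A ⊗ H_B ⊗ H_C, I(A:C|B)_ρ := S(AB) + S(BC) − S(B) − S(ABC) ≥ 0. -/

import Mathlib

open scoped ComplexOrder Matrix

/-- The von Neumann entropy `S(A) = −∑ λᵢ log λᵢ` of a Hermitian matrix,
computed from its eigenvalues (junk value `0` for non-Hermitian input). -/
noncomputable def vonNeumannEntropy {n : Type*} [Fintype n] [DecidableEq n]
    (A : Matrix n n ℂ) : ℝ :=
  if h : A.IsHermitian then -∑ i, h.eigenvalues i * Real.log (h.eigenvalues i)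
  else 0

section Tripartite

variable {a b c : Type*} [Fintype a] [DecidableEq a] [Fintype b] [DecidableEq b]
  [Fintype c] [DecidableEq c]

/-- Partial trace over `C`, giving the reduced state on `AB`. -/
noncomputable def ptrC (X : Matrix (a × b × c) (a × b × c) ℂ) :
    Matrix (a × b) (a × b) ℂ :=
  Matrix.of fun p q => ∑ k, X (p.1, p.2, k) (q.1, q.2, k)

/-- Partial trace over `A`, giving the reduced state on `BC`. -/
noncomputable def ptrA (X : Matrix (a × b × c) (a × b × c) ℂ) :
    Matrix (b × c) (b × c) ℂ :=
  Matrix.of fun p q => ∑ i, X (i, p) (i, q)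

/-- Partial trace over `A` and `C`, giving the reduced state on `B`. -/
noncomputable def ptrAC (X : Matrix (a × b × c) (a × b × c) ℂ) :
    Matrix b b ℂ :=
  Matrix.of fun p q => ∑ i, ∑ k, X (i, p, k) (i, q, k)

theorem scalar_der {α : Type*} [Fintype α] (w p q : α → ℝ) (hp : ∀ i, 0 < p i)
    (hq : ∀ i, 0 < q i) (t : ℝ) (ht : 0 ≤ t) :
    HasDerivAt (fun t => ∑ i, w i * (p i * Real.log (q i + t * p i)))
      (∑ i, w i * (p i ^ 2 / (q i + t * p i))) t := by
  apply HasDerivAt.fun_sum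
  intro i _
  have h0 : 0 < q i + t * p i := by
    have := mul_nonneg ht (hp i).le
    have := hq i
    linarith
  have h1 : HasDerivAt (fun t => q i + t * p i) (p i) t := by
    simpa using ((hasDerivAt_id t).mul_const (p i)).const_add (q i)
  have h2 := ((h1.log h0.ne').const_mul (p i)).const_mul (w i)
  have e : w i * (p i ^ 2 / (q i + t * p i)) = w i * (p i * (p i / (q i + t * p i))) := by ring
  rw [e]
  exact h2

theorem scalar_lim {α : Type*} [Fintype α] (w p q : α → ℝ) (hp : ∀ i, 0 < p i) :
    Filter.Tendsto (fun t : ℝ => ∑ i, w i * (p i * Real.log (q i / t + p i))) Filter.atTop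
      (nhds (∑ i, w i * (p i * Real.log (p i)))) := by
  apply tendsto_finsetSum
  intro i _
  refine Filter.Tendsto.const_mul _ (Filter.Tendsto.const_mul _ ?_)
  refine Filter.Tendsto.log ?_ (hp i).ne'
  simpa using (Filter.Tendsto.div_atTop (tendsto_const_nhds (x := q i))
    Filter.tendsto_id).add_const (p i)

theorem scalar_spl {α : Type*} [Fintype α] (w p q : α → ℝ) (hp : ∀ i, 0 < p i)
    (hq : ∀ i, 0 < q i) (t : ℝ) (ht : 0 < t) :
    ∑ i, w i * (p i * Real.log (q i + t * p i)) =
      Real.log t * ∑ i, w i * p i + ∑ i, w i * (p i * Real.log (q i / t + p i)) := by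
  rw [Finset.mul_sum, ← Finset.sum_add_distrib]
  refine Finset.sum_congr rfl fun i _ => ?_
  have h1 := hp i
  have h2 := hq i
  have : q i + t * p i = t * (q i / t + p i) := by field_simp
  rw [this, Real.log_mul ht.ne' (by positivity)]
  ring

/-- Scalar integration argument: comparison of the resolvent sums for all `t > 0`
yields comparison of the relative entropy sums. -/
theorem scalar_mono {ι κ : Type*} [Fintype ι] [Fintype κ]
    (w p q : ι → ℝ) (w' p' q' : κ → ℝ)
    (hp : ∀ i, 0 < p i) (hq : ∀ i, 0 < q i) (hp' : ∀ i, 0 < p' i) (hq' : ∀ i, 0 < q' i)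
    (htr : ∑ i, w i * p i = ∑ i, w' i * p' i)
    (h : ∀ t : ℝ, 0 < t →
      ∑ i, w' i * (p' i ^ 2 / (q' i + t * p' i)) ≤ ∑ i, w i * (p i ^ 2 / (q i + t * p i))) :
    ∑ i, w' i * (p' i * Real.log (p' i)) - ∑ i, w' i * (p' i * Real.log (q' i))
      ≤ ∑ i, w i * (p i * Real.log (p i)) - ∑ i, w i * (p i * Real.log (q i)) := by
  set g : ℝ → ℝ := fun t => ∑ i, w i * (p i * Real.log (q i + t * p i)) -
    ∑ i, w' i * (p' i * Real.log (q' i + t * p' i)) with hg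
  have gd : ∀ t, 0 ≤ t → HasDerivAt g _ t := fun t ht =>
    (scalar_der w p q hp hq t ht).sub (scalar_der w' p' q' hp' hq' t ht)
  have mono : MonotoneOn g (Set.Ici 0) := by
    apply monotoneOn_of_deriv_nonneg (convex_Ici 0)
    · exact fun t ht => (gd t ht).continuousAt.continuousWithinAt
    · intro t ht
      rw [interior_Ici] at ht
      exact (gd t (le_of_lt ht)).differentiableAt.differentiableWithinAt
    · intro t ht
      rw [interior_Ici] at ht
      rw [(gd t (le_of_lt ht)).deriv]
      exact sub_nonneg.2 (h t ht)
  have L : Filter.Tendsto g Filter.atTop (nhds (∑ i, w i * (p i * Real.log (p i)) -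
      ∑ i, w' i * (p' i * Real.log (p' i)))) := by
    refine ((scalar_lim w p q hp).sub (scalar_lim w' p' q' hp')).congr' ?_
    filter_upwards [Filter.eventually_gt_atTop 0] with t ht
    rw [hg]
    simp only
    rw [scalar_spl w p q hp hq t ht, scalar_spl w' p' q' hp' hq' t ht, htr]
    ring
  have := ge_of_tendsto L (b := g 0) (by
    filter_upwards [Filter.eventually_gt_atTop 0] with t ht
    exact mono (Set.mem_Ici.2 le_rfl) (Set.mem_Ici.2 ht.le) ht.le)
  simp only [hg, zero_mul, add_zero] at this
  linarith

/-- `A` is unitarily diagonalised by `U` with real eigenvalues `p`. -/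
structure IsDiag {n : Type*} [Fintype n] [DecidableEq n] (A U : Matrix n n ℂ) (p : n → ℝ) :
    Prop where
  left : Uᴴ * U = 1
  right : U * Uᴴ = 1
  eq : A = U * Matrix.diagonal (fun i => (p i : ℂ)) * Uᴴ

/-- The variational functional. -/
noncomputable def varPhi {n : Type*} [Fintype n] (t : ℝ) (A B X : Matrix n n ℂ) : ℝ :=
  2 * (Xᴴ * A).trace.re - ((X * Xᴴ) * B).trace.re - t * ((Xᴴ * X) * A).trace.re

theorem varPhi_eq {n : Type*} [Fintype n] [DecidableEq n] {A B U V : Matrix n n ℂ}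
    {p q : n → ℝ} (hA : IsDiag A U p) (hB : IsDiag B V q) (t : ℝ) (Y : Matrix n n ℂ) :
    varPhi t A B (V * Y * Uᴴ) = ∑ x : n × n,
      (2 * (star (Y x.1 x.2) * (Vᴴ * U) x.1 x.2).re * p x.2
        - (q x.1 + t * p x.2) * Complex.normSq (Y x.1 x.2)) := by
  have hU := hA.left
  have hV := hB.left
  have e1 : ((V * Y * Uᴴ)ᴴ * A).trace
      = (Yᴴ * (Vᴴ * U) * Matrix.diagonal (fun i => (p i : ℂ))).trace := by
    rw [hA.eq, Matrix.conjTranspose_mul, Matrix.conjTranspose_mul,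
      Matrix.conjTranspose_conjTranspose]
    rw [show U * (Yᴴ * Vᴴ) * (U * Matrix.diagonal (fun i => (p i : ℂ)) * Uᴴ) =
      U * (Yᴴ * (Vᴴ * U) * Matrix.diagonal (fun i => (p i : ℂ)) * Uᴴ) by
        simp only [Matrix.mul_assoc]]
    rw [Matrix.trace_mul_comm, Matrix.mul_assoc, hU, Matrix.mul_one]
  have e2 : ((V * Y * Uᴴ) * (V * Y * Uᴴ)ᴴ * B).trace
      = (Y * Yᴴ * Matrix.diagonal (fun i => (q i : ℂ))).trace := by
    rw [hB.eq, Matrix.conjTranspose_mul, Matrix.conjTranspose_mul,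
      Matrix.conjTranspose_conjTranspose]
    rw [show V * Y * Uᴴ * (U * (Yᴴ * Vᴴ)) * (V * Matrix.diagonal (fun i => (q i : ℂ)) * Vᴴ) =
      V * (Y * (Uᴴ * U) * Yᴴ * (Vᴴ * V) * Matrix.diagonal (fun i => (q i : ℂ)) * Vᴴ) by
        simp only [Matrix.mul_assoc]]
    rw [Matrix.trace_mul_comm, Matrix.mul_assoc, hU, hV, Matrix.mul_one, Matrix.mul_one,
      Matrix.mul_one]
  have e3 : ((V * Y * Uᴴ)ᴴ * (V * Y * Uᴴ) * A).trace
      = (Yᴴ * Y * Matrix.diagonal (fun i => (p i : ℂ))).trace := by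
    rw [hA.eq, Matrix.conjTranspose_mul, Matrix.conjTranspose_mul,
      Matrix.conjTranspose_conjTranspose]
    rw [show U * (Yᴴ * Vᴴ) * (V * Y * Uᴴ) * (U * Matrix.diagonal (fun i => (p i : ℂ)) * Uᴴ) =
      U * (Yᴴ * (Vᴴ * V) * Y * (Uᴴ * U) * Matrix.diagonal (fun i => (p i : ℂ)) * Uᴴ) by
        simp only [Matrix.mul_assoc]]
    rw [Matrix.trace_mul_comm, Matrix.mul_assoc, hU, hV, Matrix.mul_one, Matrix.mul_one,
      Matrix.mul_one]
  rw [varPhi, e1, e2, e3]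
  generalize Vᴴ * U = Z
  have f1 : (Yᴴ * Z * Matrix.diagonal (fun i => (p i : ℂ))).trace.re
      = ∑ j, ∑ i, (star (Y j i) * Z j i).re * p i := by
    rw [Finset.sum_comm]
    simp only [Matrix.trace, Matrix.diag_apply, Matrix.mul_diagonal, Complex.re_sum,
      Complex.re_mul_ofReal]
    simp only [Matrix.mul_apply, Complex.re_sum, Matrix.conjTranspose_apply, Finset.sum_mul]
  have f2 : (Y * Yᴴ * Matrix.diagonal (fun i => (q i : ℂ))).trace.re
      = ∑ j, ∑ i, Complex.normSq (Y j i) * q j := by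
    simp only [Matrix.trace, Matrix.diag_apply, Matrix.mul_diagonal, Complex.re_sum,
      Complex.re_mul_ofReal]
    simp only [Matrix.mul_apply, Complex.re_sum, Matrix.conjTranspose_apply, Finset.sum_mul]
    simp [Complex.normSq_apply]
  have f3 : (Yᴴ * Y * Matrix.diagonal (fun i => (p i : ℂ))).trace.re
      = ∑ j, ∑ i, Complex.normSq (Y j i) * p i := by
    rw [Finset.sum_comm]
    simp only [Matrix.trace, Matrix.diag_apply, Matrix.mul_diagonal, Complex.re_sum,
      Complex.re_mul_ofReal]
    simp only [Matrix.mul_apply, Complex.re_sum, Matrix.conjTranspose_apply, Finset.sum_mul]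
    simp [Complex.normSq_apply]
  rw [f1, f2, f3, Fintype.sum_prod_type]
  simp only [Finset.mul_sum, ← Finset.sum_sub_distrib]
  refine Finset.sum_congr rfl fun j _ => Finset.sum_congr rfl fun i _ => ?_
  ring

theorem varPhi_le {n : Type*} [Fintype n] [DecidableEq n] {A B U V : Matrix n n ℂ}
    {p q : n → ℝ} (hA : IsDiag A U p) (hB : IsDiag B V q) (hp : ∀ i, 0 < p i)
    (hq : ∀ i, 0 < q i) (t : ℝ) (ht : 0 < t) (X : Matrix n n ℂ) :
    varPhi t A B X ≤ ∑ x : n × n, Complex.normSq ((Vᴴ * U) x.1 x.2) *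
      (p x.2 ^ 2 / (q x.1 + t * p x.2)) := by
  have hX : X = V * (Vᴴ * X * U) * Uᴴ := by
    rw [show V * (Vᴴ * X * U) * Uᴴ = (V * Vᴴ) * X * (U * Uᴴ) by simp only [Matrix.mul_assoc],
      hA.right, hB.right, Matrix.one_mul, Matrix.mul_one]
  rw [hX, varPhi_eq hA hB]
  refine Finset.sum_le_sum fun x _ => ?_
  generalize (Vᴴ * X * U) x.1 x.2 = y
  generalize (Vᴴ * U) x.1 x.2 = z
  have h1 := hp x.2
  have h2 := hq x.1
  generalize p x.2 = r at *
  generalize q x.1 = s at *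
  have h3 : 0 < s + t * r := by positivity
  rw [← mul_div_assoc, le_div_iff₀ h3]
  generalize s + t * r = d at *
  simp only [Complex.normSq_apply, Complex.star_def, Complex.mul_re, Complex.conj_re,
    Complex.conj_im]
  nlinarith [sq_nonneg (d * y.re - z.re * r), sq_nonneg (d * y.im - z.im * r)]

theorem exists_varPhi {n : Type*} [Fintype n] [DecidableEq n] {A B U V : Matrix n n ℂ}
    {p q : n → ℝ} (hA : IsDiag A U p) (hB : IsDiag B V q) (hp : ∀ i, 0 < p i)
    (hq : ∀ i, 0 < q i) (t : ℝ) (ht : 0 < t) :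
    ∃ X, varPhi t A B X = ∑ x : n × n, Complex.normSq ((Vᴴ * U) x.1 x.2) *
      (p x.2 ^ 2 / (q x.1 + t * p x.2)) := by
  refine ⟨V * (Matrix.of fun j i => (Vᴴ * U) j i * ((p i / (q j + t * p i) : ℝ) : ℂ)) * Uᴴ, ?_⟩
  rw [varPhi_eq hA hB]
  refine Finset.sum_congr rfl fun x _ => ?_
  simp only [Matrix.of_apply]
  generalize (Vᴴ * U) x.1 x.2 = z
  have h1 := hp x.2
  have h2 := hq x.1
  generalize p x.2 = r at *
  generalize q x.1 = s at *
  have h3 : 0 < s + t * r := by positivity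
  simp only [Complex.normSq_apply, Complex.star_def, Complex.mul_re, Complex.conj_re,
    Complex.conj_im, Complex.mul_im, Complex.ofReal_re, Complex.ofReal_im]
  field_simp
  ring

/-- Partial trace over the first factor. -/
noncomputable def ptrFst {α m : Type*} [Fintype α] (X : Matrix (α × m) (α × m) ℂ) :
    Matrix m m ℂ := Matrix.of fun p q => ∑ i, X (i, p) (i, q)

open scoped Kronecker in
theorem trace_one_kron {α m : Type*} [Fintype α] [DecidableEq α] [Fintype m]
    (M : Matrix m m ℂ) (X : Matrix (α × m) (α × m) ℂ) :
    (((1 : Matrix α α ℂ) ⊗ₖ M) * X).trace = (M * ptrFst X).trace := by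
  have h : ∀ i x, (((1 : Matrix α α ℂ) ⊗ₖ M) * X) (i, x) (i, x)
      = ∑ y, M x y * X (i, y) (i, x) := by
    intro i x
    rw [Matrix.mul_apply, Fintype.sum_prod_type, Finset.sum_comm]
    refine Finset.sum_congr rfl fun y _ => ?_
    simp [Matrix.one_apply]
  simp only [Matrix.trace, Matrix.diag_apply, Fintype.sum_prod_type, h]
  rw [Finset.sum_comm]
  refine Finset.sum_congr rfl fun x _ => ?_
  rw [Finset.sum_comm, Matrix.mul_apply]
  refine Finset.sum_congr rfl fun y _ => ?_
  simp [ptrFst, Finset.mul_sum]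

open scoped Kronecker in
theorem varPhi_one_kron {α m : Type*} [Fintype α] [DecidableEq α] [Fintype m]
    (t : ℝ) (A B : Matrix (α × m) (α × m) ℂ) (X : Matrix m m ℂ) :
    varPhi t A B ((1 : Matrix α α ℂ) ⊗ₖ X) = varPhi t (ptrFst A) (ptrFst B) X := by
  simp only [varPhi, Matrix.conjTranspose_kronecker, Matrix.conjTranspose_one,
    ← Matrix.mul_kronecker_mul, Matrix.one_mul, trace_one_kron]

theorem sum_normSq_left {n : Type*} [Fintype n] [DecidableEq n] {A B U V : Matrix n n ℂ}
    {p q : n → ℝ} (hA : IsDiag A U p) (hB : IsDiag B V q) (f : n → ℝ) :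
    ∑ x : n × n, Complex.normSq ((Vᴴ * U) x.1 x.2) * f x.2 = ∑ i, f i := by
  rw [Fintype.sum_prod_type, Finset.sum_comm]
  refine Finset.sum_congr rfl fun i _ => ?_
  change ∑ j, Complex.normSq ((Vᴴ * U) j i) * f i = f i
  rw [← Finset.sum_mul]
  have h : ((Vᴴ * U)ᴴ * (Vᴴ * U)) i i = 1 := by
    rw [Matrix.conjTranspose_mul, Matrix.conjTranspose_conjTranspose,
      show Uᴴ * V * (Vᴴ * U) = Uᴴ * (V * Vᴴ) * U by simp only [Matrix.mul_assoc],
      hB.right, Matrix.mul_one, hA.left, Matrix.one_apply_eq]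
  have h' := congrArg Complex.re h
  rw [Matrix.mul_apply, Complex.re_sum] at h'
  rw [show ∑ j, Complex.normSq ((Vᴴ * U) j i) = 1 by
    rw [← Complex.one_re, ← h']
    refine Finset.sum_congr rfl fun j _ => ?_
    rw [Matrix.conjTranspose_apply]
    simp [Complex.normSq_apply]]
  rw [one_mul]

theorem sum_normSq_right {n : Type*} [Fintype n] [DecidableEq n] {A U V : Matrix n n ℂ}
    {p : n → ℝ} (hA : IsDiag A U p) (j : n) :
    ∑ i, Complex.normSq ((Vᴴ * U) j i) * p i = ((Vᴴ * A * V) j j).re := by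
  have : Vᴴ * A * V = (Vᴴ * U) * Matrix.diagonal (fun i => (p i : ℂ)) * (Vᴴ * U)ᴴ := by
    rw [hA.eq, Matrix.conjTranspose_mul, Matrix.conjTranspose_conjTranspose]
    simp only [Matrix.mul_assoc]
  rw [this, Matrix.mul_apply, Complex.re_sum]
  refine Finset.sum_congr rfl fun i _ => ?_
  rw [Matrix.mul_diagonal, Matrix.conjTranspose_apply]
  simp [Complex.normSq_apply]
  ring

theorem IsDiag.trace {n : Type*} [Fintype n] [DecidableEq n] {A U : Matrix n n ℂ}
    {p : n → ℝ} (hA : IsDiag A U p) : A.trace = ((∑ i, p i : ℝ) : ℂ) := by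
  rw [hA.eq, Matrix.trace_mul_comm, ← Matrix.mul_assoc, hA.left, Matrix.one_mul,
    Matrix.trace_diagonal]
  push_cast
  rfl

theorem ptrFst_trace {α m : Type*} [Fintype α] [Fintype m]
    (X : Matrix (α × m) (α × m) ℂ) : (ptrFst X).trace = X.trace := by
  simp only [Matrix.trace, Matrix.diag_apply, Fintype.sum_prod_type, ptrFst, Matrix.of_apply]
  rw [Finset.sum_comm]

/-- Monotonicity of the relative entropy under partial trace. -/
theorem relEnt_mono {α m : Type*} [Fintype α] [DecidableEq α] [Fintype m] [DecidableEq m]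
    {A B U V : Matrix (α × m) (α × m) ℂ} {p q : α × m → ℝ} {U' V' : Matrix m m ℂ}
    {p' q' : m → ℝ} (hA : IsDiag A U p) (hB : IsDiag B V q)
    (hA' : IsDiag (ptrFst A) U' p') (hB' : IsDiag (ptrFst B) V' q')
    (hp : ∀ i, 0 < p i) (hq : ∀ i, 0 < q i) (hp' : ∀ i, 0 < p' i) (hq' : ∀ i, 0 < q' i) :
    ∑ i, p' i * Real.log (p' i) - ∑ j, ((V'ᴴ * ptrFst A * V') j j).re * Real.log (q' j)
      ≤ ∑ i, p i * Real.log (p i) - ∑ j, ((Vᴴ * A * V) j j).re * Real.log (q j) := by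
  have key := scalar_mono (fun x : (α × m) × (α × m) => Complex.normSq ((Vᴴ * U) x.1 x.2))
    (fun x => p x.2)
    (fun x => q x.1) (fun x : m × m => Complex.normSq ((V'ᴴ * U') x.1 x.2)) (fun x => p' x.2)
    (fun x => q' x.1) (fun x => hp _) (fun x => hq _) (fun x => hp' _) (fun x => hq' _)
    (by
      rw [sum_normSq_left hA hB p, sum_normSq_left hA' hB' p']
      have := ptrFst_trace A
      rw [hA.trace, hA'.trace] at this
      exact_mod_cast this.symm)
    (by
      intro t ht
      obtain ⟨X, hX⟩ := exists_varPhi hA' hB' hp' hq' t ht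
      rw [← hX, ← varPhi_one_kron]
      exact varPhi_le hA hB hp hq t ht _)
  rw [sum_normSq_left hA hB (fun i => p i * Real.log (p i)),
    sum_normSq_left hA' hB' (fun i => p' i * Real.log (p' i))] at key
  convert key using 2
  · rw [Fintype.sum_prod_type]
    refine Finset.sum_congr rfl fun j _ => ?_
    rw [← sum_normSq_right hA' j, Finset.sum_mul]
    exact Finset.sum_congr rfl fun i _ => by ring
  · rw [Fintype.sum_prod_type (f := fun x : (α × m) × (α × m) => _)]
    refine Finset.sum_congr rfl fun j _ => ?_
    rw [← sum_normSq_right hA j, Finset.sum_mul]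
    exact Finset.sum_congr rfl fun i _ => by ring

theorem IsDiag.shift {n : Type*} [Fintype n] [DecidableEq n] {A U : Matrix n n ℂ}
    {p : n → ℝ} (hA : IsDiag A U p) (e : ℝ) :
    IsDiag (A + (e : ℂ) • (1 : Matrix n n ℂ)) U (fun i => p i + e) := by
  refine ⟨hA.left, hA.right, ?_⟩
  have : (Matrix.diagonal fun i => ((p i + e : ℝ) : ℂ))
      = Matrix.diagonal (fun i => (p i : ℂ)) + (e : ℂ) • (1 : Matrix n n ℂ) := by
    ext i j
    by_cases h : i = j
    · subst h; simp
    · simp [h]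
  rw [this, Matrix.mul_add, Matrix.add_mul, ← hA.eq]
  simp [hA.right]

theorem IsDiag.submatrix {n m : Type*} [Fintype n] [DecidableEq n] [Fintype m] [DecidableEq m]
    {A U : Matrix n n ℂ} {p : n → ℝ} (hA : IsDiag A U p) (e : m ≃ n) :
    IsDiag (A.submatrix e e) (U.submatrix e e) (fun i => p (e i)) := by
  refine ⟨?_, ?_, ?_⟩
  · rw [Matrix.conjTranspose_submatrix, Matrix.submatrix_mul_equiv, hA.left,
      Matrix.submatrix_one_equiv]
  · rw [Matrix.conjTranspose_submatrix, Matrix.submatrix_mul_equiv, hA.right,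
      Matrix.submatrix_one_equiv]
  · have : (Matrix.diagonal fun i => (p (e i) : ℂ))
        = (Matrix.diagonal (fun i => (p i : ℂ))).submatrix e e :=
      (Matrix.submatrix_diagonal_equiv (fun i => (p i : ℂ)) e).symm
    rw [Matrix.conjTranspose_submatrix, this, Matrix.submatrix_mul_equiv,
      Matrix.submatrix_mul_equiv, ← hA.eq]

open scoped Kronecker in
theorem IsDiag.kron_one {n : Type*} (γ : Type*) [Fintype n] [DecidableEq n] [Fintype γ]
    [DecidableEq γ] {A U : Matrix n n ℂ} {p : n → ℝ} (hA : IsDiag A U p) :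
    IsDiag (A ⊗ₖ (1 : Matrix γ γ ℂ)) (U ⊗ₖ (1 : Matrix γ γ ℂ)) (fun x => p x.1) := by
  refine ⟨?_, ?_, ?_⟩
  · rw [Matrix.conjTranspose_kronecker, ← Matrix.mul_kronecker_mul, hA.left]
    simp
  · rw [Matrix.conjTranspose_kronecker, ← Matrix.mul_kronecker_mul, hA.right]
    simp
  · have : (Matrix.diagonal fun x : n × γ => (p x.1 : ℂ))
        = Matrix.diagonal (fun i => (p i : ℂ)) ⊗ₖ (1 : Matrix γ γ ℂ) := by
      rw [← Matrix.diagonal_one, Matrix.diagonal_kronecker_diagonal]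
      simp
    rw [Matrix.conjTranspose_kronecker, this, ← Matrix.mul_kronecker_mul,
      ← Matrix.mul_kronecker_mul, ← hA.eq]
    simp

theorem IsDiag.conj_apply {n : Type*} [Fintype n] [DecidableEq n] {A U : Matrix n n ℂ}
    {p : n → ℝ} (hA : IsDiag A U p) (i : n) : ((Uᴴ * A * U) i i).re = p i := by
  have : Uᴴ * A * U = Matrix.diagonal (fun i => (p i : ℂ)) := by
    rw [hA.eq, show Uᴴ * (U * Matrix.diagonal (fun i => (p i : ℂ)) * Uᴴ) * U
      = (Uᴴ * U) * Matrix.diagonal (fun i => (p i : ℂ)) * (Uᴴ * U) by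
        simp only [Matrix.mul_assoc], hA.left, Matrix.one_mul, Matrix.mul_one]
  rw [this]
  simp

/-- Partial trace over the second factor. -/
noncomputable def ptrSnd {n γ : Type*} [Fintype γ] (X : Matrix (n × γ) (n × γ) ℂ) :
    Matrix n n ℂ := Matrix.of fun p q => ∑ k, X (p, k) (q, k)

open scoped Kronecker in
theorem cross_term {n γ : Type*} [Fintype n] [DecidableEq n] [Fintype γ] [DecidableEq γ]
    {X : Matrix (n × γ) (n × γ) ℂ} {V : Matrix n n ℂ} {r : n → ℝ}
    (h : IsDiag (ptrSnd X) V r) (f : n → ℝ) :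
    ∑ j, (((V ⊗ₖ (1 : Matrix γ γ ℂ))ᴴ * X * (V ⊗ₖ (1 : Matrix γ γ ℂ))) j j).re * f j.1
      = ∑ s, r s * f s := by
  rw [Fintype.sum_prod_type]
  refine Finset.sum_congr rfl fun s _ => ?_
  change ∑ k, (((V ⊗ₖ (1 : Matrix γ γ ℂ))ᴴ * X * (V ⊗ₖ (1 : Matrix γ γ ℂ))) (s, k) (s, k)).re
    * f s = _
  rw [← Finset.sum_mul, ← h.conj_apply s, ← Complex.re_sum]
  congr 2
  have e1 : ∀ k x, ((V ⊗ₖ (1 : Matrix γ γ ℂ))ᴴ * X) (s, k) x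
      = ∑ y, star (V y s) * X (y, k) x := by
    intro k x
    rw [Matrix.mul_apply, Fintype.sum_prod_type]
    refine Finset.sum_congr rfl fun y _ => ?_
    simp [Matrix.one_apply, apply_ite (starRingEnd ℂ)]
  have e2 : ∀ k, ((V ⊗ₖ (1 : Matrix γ γ ℂ))ᴴ * X * (V ⊗ₖ (1 : Matrix γ γ ℂ))) (s, k) (s, k)
      = ∑ z, (∑ y, star (V y s) * X (y, k) (z, k)) * V z s := by
    intro k
    rw [Matrix.mul_apply, Fintype.sum_prod_type]
    refine Finset.sum_congr rfl fun z _ => ?_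
    simp only [e1]
    simp [Matrix.one_apply]
  simp only [e2]
  rw [Finset.sum_comm, Matrix.mul_apply]
  refine Finset.sum_congr rfl fun z _ => ?_
  rw [← Finset.sum_mul, Finset.sum_comm, Matrix.mul_apply]
  congr 1
  refine Finset.sum_congr rfl fun y _ => ?_
  simp [ptrSnd, Finset.mul_sum]

/-- Strong subadditivity for positive definite matrices, with given diagonalisations. -/
theorem ssa_pos {R U : Matrix (a × b × c) (a × b × c) ℂ} {p : a × b × c → ℝ}
    {V : Matrix (a × b) (a × b) ℂ} {r : a × b → ℝ}
    {U' : Matrix (b × c) (b × c) ℂ} {p' : b × c → ℝ} {V' : Matrix b b ℂ} {r' : b → ℝ}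
    (h1 : IsDiag R U p) (h2 : IsDiag (ptrC R) V r) (h3 : IsDiag (ptrA R) U' p')
    (h4 : IsDiag (ptrAC R) V' r')
    (hp : ∀ i, 0 < p i) (hr : ∀ i, 0 < r i) (hp' : ∀ i, 0 < p' i) (hr' : ∀ i, 0 < r' i) :
    ∑ i, p' i * Real.log (p' i) - ∑ i, r' i * Real.log (r' i)
      ≤ ∑ i, p i * Real.log (p i) - ∑ i, r i * Real.log (r i) := by
  let e : a × b × c ≃ (a × b) × c := (Equiv.prodAssoc a b c).symm
  have h2' := (h2.kron_one c).submatrix e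
  have h4' := h4.kron_one c
  have hs : ptrFst ((Matrix.kroneckerMap (· * ·) (ptrC R) (1 : Matrix c c ℂ)).submatrix e e)
      = Matrix.kroneckerMap (· * ·) (ptrAC R) (1 : Matrix c c ℂ) := by
    ext x y
    simp [ptrFst, ptrC, ptrAC, e, Finset.sum_mul]
  rw [← hs] at h4'
  have key := relEnt_mono (A := R) h1 h2' h3 h4' hp (fun _ => hr _) hp' (fun _ => hr' _)
  have c1 := cross_term (X := ptrFst R) (V := V') (r := r') (γ := c)
    (by
      have : ptrSnd (ptrFst R) = ptrAC R := by
        ext x y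
        simp only [ptrSnd, ptrFst, ptrAC, Matrix.of_apply]
        rw [Finset.sum_comm]
      rw [this]; exact h4) (fun i => Real.log (r' i))
  have c2 := cross_term (X := R.submatrix e.symm e.symm) (V := V) (r := r) (γ := c)
    (by exact h2) (fun i => Real.log (r i))
  rw [c1] at key
  rw [← c2, ← Equiv.sum_comp e]
  convert key using 5 with j
  rw [Matrix.conjTranspose_submatrix]
  have : R = (R.submatrix e.symm e.symm).submatrix e e := by simp
  conv_rhs => rw [this]
  rw [Matrix.submatrix_mul_equiv, Matrix.submatrix_mul_equiv, Matrix.submatrix_apply]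

theorem isDiag_eigen {n : Type*} [Fintype n] [DecidableEq n] {A : Matrix n n ℂ}
    (h : A.IsHermitian) : IsDiag A (h.eigenvectorUnitary : Matrix n n ℂ) h.eigenvalues := by
  refine ⟨?_, ?_, ?_⟩
  · exact Unitary.coe_star_mul_self h.eigenvectorUnitary
  · exact Unitary.coe_mul_star_self h.eigenvectorUnitary
  · have := h.spectral_theorem
    rw [Unitary.conjStarAlgAut_apply] at this
    exact this

theorem entropy_cont {n : Type*} [Fintype n] (p : n → ℝ) (k : ℝ) :
    Continuous (fun e : ℝ => ∑ i, (p i + k * e) * Real.log (p i + k * e)) :=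
  continuous_finsetSum _ fun i _ =>
    Real.continuous_mul_log.comp (by fun_prop : Continuous fun e : ℝ => p i + k * e)

/-- Strong subadditivity of von Neumann entropy: the conditional mutual
information `I(A:C|B) = S(AB) + S(BC) − S(B) − S(ABC)` of any tripartite state
is nonnegative. -/
theorem conditional_mutual_information_nonneg
    (ρ : Matrix (a × b × c) (a × b × c) ℂ)
    (hρ : ρ.PosSemidef) (hρtr : ρ.trace = 1) :
    0 ≤ vonNeumannEntropy (ptrC ρ) + vonNeumannEntropy (ptrA ρ)
      - vonNeumannEntropy (ptrAC ρ) - vonNeumannEntropy ρ := by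
  have psC : (ptrC ρ).PosSemidef := by
    have : ptrC ρ = ∑ k, ρ.submatrix (fun x : a × b => (x.1, x.2, k)) (fun x => (x.1, x.2, k)) := by
      ext x y
      simp [ptrC, Matrix.sum_apply]
    rw [this]
    exact Matrix.posSemidef_sum _ fun k _ => hρ.submatrix _
  have psA : (ptrA ρ).PosSemidef := by
    have : ptrA ρ = ∑ i, ρ.submatrix (fun x : b × c => (i, x)) (fun x => (i, x)) := by
      ext x y
      simp [ptrA, Matrix.sum_apply]
    rw [this]
    exact Matrix.posSemidef_sum _ fun k _ => hρ.submatrix _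
  have psAC : (ptrAC ρ).PosSemidef := by
    have : ptrAC ρ = ∑ i, ∑ k, ρ.submatrix (fun x : b => (i, x, k)) (fun x => (i, x, k)) := by
      ext x y
      simp [ptrAC, Matrix.sum_apply]
    rw [this]
    exact Matrix.posSemidef_sum _ fun i _ => Matrix.posSemidef_sum _ fun k _ => hρ.submatrix _
  have hne : Nonempty (a × b × c) := by
    by_contra hcon
    rw [not_nonempty_iff] at hcon
    simp [Matrix.trace] at hρtr
  have hna : Nonempty a := hne.map (fun x => x.1)
  have hnc : Nonempty c := hne.map (fun x => x.2.2)
  have ca : (0 : ℝ) < Fintype.card a := by exact_mod_cast Fintype.card_pos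
  have cc : (0 : ℝ) < Fintype.card c := by exact_mod_cast Fintype.card_pos
  rw [vonNeumannEntropy, vonNeumannEntropy, vonNeumannEntropy, vonNeumannEntropy,
    dif_pos psC.isHermitian, dif_pos psA.isHermitian, dif_pos psAC.isHermitian,
    dif_pos hρ.isHermitian]
  have d0 := isDiag_eigen hρ.isHermitian
  have dC := isDiag_eigen psC.isHermitian
  have dA := isDiag_eigen psA.isHermitian
  have dAC := isDiag_eigen psAC.isHermitian
  have n0 := hρ.eigenvalues_nonneg
  have nC := psC.eigenvalues_nonneg
  have nA := psA.eigenvalues_nonneg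
  have nAC := psAC.eigenvalues_nonneg
  generalize hρ.isHermitian.eigenvalues = p at *
  generalize psC.isHermitian.eigenvalues = r at *
  generalize psA.isHermitian.eigenvalues = p' at *
  generalize psAC.isHermitian.eigenvalues = r' at *
  have ineq : ∀ e : ℝ, 0 < e →
      ∑ i, (p' i + Fintype.card a * e) * Real.log (p' i + Fintype.card a * e)
        - ∑ i, (r' i + Fintype.card a * Fintype.card c * e)
          * Real.log (r' i + Fintype.card a * Fintype.card c * e)
      ≤ ∑ i, (p i + e) * Real.log (p i + e)
        - ∑ i, (r i + Fintype.card c * e) * Real.log (r i + Fintype.card c * e) := by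
    intro e he
    refine ssa_pos (R := ρ + (e : ℂ) • (1 : Matrix (a × b × c) (a × b × c) ℂ)) (d0.shift e)
      (V := psC.isHermitian.eigenvectorUnitary) (U' := psA.isHermitian.eigenvectorUnitary)
      (V' := psAC.isHermitian.eigenvectorUnitary) ?_ ?_ ?_ ?_ ?_ ?_ ?_
    · convert dC.shift (Fintype.card c * e) using 1
      ext ⟨i, j⟩ ⟨i', j'⟩
      simp [ptrC, Finset.sum_add_distrib, Matrix.one_apply]
    · convert dA.shift (Fintype.card a * e) using 1
      ext ⟨i, j⟩ ⟨i', j'⟩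
      simp [ptrA, Finset.sum_add_distrib, Matrix.one_apply]
    · convert dAC.shift (Fintype.card a * Fintype.card c * e) using 1
      ext i i'
      simp [ptrAC, Finset.sum_add_distrib, Matrix.one_apply, mul_assoc]
    · exact fun i => by have := n0 i; positivity
    · exact fun i => by have := nC i; positivity
    · exact fun i => by have := nA i; positivity
    · exact fun i => by have := nAC i; positivity
  have L1 := (entropy_cont p' (Fintype.card a)).sub
    (entropy_cont r' (Fintype.card a * Fintype.card c))
  have L2 := (entropy_cont p 1).sub (entropy_cont r (Fintype.card c))
  have lim := le_of_tendsto_of_tendsto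
    ((L1.tendsto 0).mono_left (nhdsWithin_le_nhds (s := Set.Ioi 0)))
    ((L2.tendsto 0).mono_left (nhdsWithin_le_nhds (s := Set.Ioi 0)))
    (by
      filter_upwards [self_mem_nhdsWithin] with e he
      simpa using ineq e he)
  simp only [Pi.sub_apply, mul_zero, add_zero] at lim
  linarith

end Tripartite
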